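/- Fix a, b ∈ ℂ with a − b ∉ Λ. Then the function G(z) = ζ₂(b−z)·f₂(a−z) − ζ₂(a−z)·f₂(b−z) + (ζ₂(a−z) − ζ₂(b−z))·f₂(a−b) − h(a−z) + h(b−z) is constant on the set {z ∈ ℂ : a − z ∉ Λ and b − z ∉ Λ}, where h(z) = ζ₂(z)·(f₂(z) + 3ζ(iδ)/(iδ)) − (2/3)·(ζ₂(z)³ + 3(ζ(iδ)/(iδ))ζ₂(z) + (1/2)℘₂′(z)). -/

import Mathlib

open Complex Filter MeasureTheory Finset

noncomputable section

/-- The period lattice with half-periods `ℓ` and `iδ`. -/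
def Lambda (ℓ δ : ℝ) : Set ℂ :=
  {z | ∃ n m : ℤ, z = 2 * (n : ℂ) * (ℓ : ℂ) + 2 * (m : ℂ) * ((δ : ℂ) * Complex.I)}

/-- The nonzero lattice points. -/
def latticePts (ℓ δ : ℝ) : Set ℂ := Lambda ℓ δ \ {0}

/-- Weierstrass ℘-function with half-periods `ℓ`, `iδ`. -/
def wP (ℓ δ : ℝ) (z : ℂ) : ℂ :=
  1 / z ^ 2 + ∑' ω : latticePts ℓ δ, (1 / (z - (ω : ℂ)) ^ 2 - 1 / (ω : ℂ) ^ 2)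

/-- Weierstrass ζ-function with half-periods `ℓ`, `iδ`. -/
def wZeta (ℓ δ : ℝ) (z : ℂ) : ℂ :=
  1 / z + ∑' ω : latticePts ℓ δ, (1 / (z - (ω : ℂ)) + 1 / (ω : ℂ) + z / (ω : ℂ) ^ 2)

def zeta2 (ℓ δ : ℝ) (z : ℂ) : ℂ :=
  wZeta ℓ δ z - (wZeta ℓ δ ((δ : ℂ) * Complex.I) / ((δ : ℂ) * Complex.I)) * z

def wp2 (ℓ δ : ℝ) (z : ℂ) : ℂ :=
  wP ℓ δ z + wZeta ℓ δ ((δ : ℂ) * Complex.I) / ((δ : ℂ) * Complex.I)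

def f2 (ℓ δ : ℝ) (z : ℂ) : ℂ := (zeta2 ℓ δ z) ^ 2 - wp2 ℓ δ z

def zeta1 (ℓ δ : ℝ) (z : ℂ) : ℂ :=
  wZeta ℓ δ z - (wZeta ℓ δ (ℓ : ℂ) / (ℓ : ℂ)) * z

/-- Bilinear dot product on `ℂ³` (no conjugation). -/
def dot3 (s t : Fin 3 → ℂ) : ℂ := s 0 * t 0 + s 1 * t 1 + s 2 * t 2

/-- Cross product on `ℂ³`. -/
def cross3 (s t : Fin 3 → ℂ) : Fin 3 → ℂ :=
  ![s 1 * t 2 - s 2 * t 1, s 2 * t 0 - s 0 * t 2, s 0 * t 1 - s 1 * t 0]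

/-- The principal-value integral operator `T`. -/
def pvT (ℓ δ : ℝ) (f : ℝ → Fin 3 → ℂ) (x : ℝ) : Fin 3 → ℂ := fun i =>
  (1 / (Real.pi : ℂ)) * limUnder (nhdsWithin (0 : ℝ) (Set.Ioi 0)) (fun ε : ℝ =>
    ∫ y in {y : ℝ | y ∈ Set.Icc (-ℓ) ℓ ∧ ε ≤ |y - x|},
      zeta1 ℓ δ ((y : ℂ) - (x : ℂ)) * f y i)

/-- The integral operator `T̃`. -/
def tilT (ℓ δ : ℝ) (f : ℝ → Fin 3 → ℂ) (x : ℝ) : Fin 3 → ℂ := fun i =>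
  (1 / (Real.pi : ℂ)) * ∫ y in Set.Icc (-ℓ) ℓ,
      zeta1 ℓ δ ((y : ℂ) - (x : ℂ) + (δ : ℂ) * Complex.I) * f y i

/-! With `C = ζ(iδ)/(iδ)`, the constant is `2 h(a - b)`, and the identity `G(z) = 2 h(a - b)` holds
for every period lattice and every linear correction `ζ(z) - C z` of `ζ`. Put `u = a - z`,
`v = z - b`, `w = b - a`, so that `u + v + w = 0` and the linear terms cancel in
`S = ζ(u) + ζ(v) + ζ(w)`. The Frobenius–Stickelberger relation `S² = ℘(u) + ℘(v) + ℘(w)`, together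
with its derivatives `2 S (℘(v) - ℘(u)) = ℘'(u) - ℘'(v)` and
`2 S (℘(w) - ℘(u)) = ℘'(u) - ℘'(w)` along `u + v + w = 0`, turns the claim into polynomial algebra.
The relation itself is Liouville's theorem: as a function of `u`, the difference of its two sides
is elliptic and invariant under `u ↔ v`, so its singularities all reduce to the one at `u = 0`,
where it tends to `0`. -/

theorem differentiable_of_continuous_of_countable {E : Type*} [NormedAddCommGroup E]
    [NormedSpace ℂ E] [CompleteSpace E] {f : ℂ → E} {s : Set ℂ} (hs : s.Countable)
    (hf : Continuous f) (hd : ∀ z ∉ s, DifferentiableAt ℂ f z) : Differentiable ℂ f := fun z ↦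
  (Complex.hasFPowerSeriesOnBall_of_differentiable_off_countable hs hf.continuousOn
    (fun x hx ↦ hd x hx.2) (c := z) one_pos).analyticAt.differentiableAt

open scoped Topology PeriodPair

/-- The Weierstrass `ζ`-function of a period lattice without its principal part `1 / z` at `0`.
It is analytic at `0`. -/
def weierstrassZetaRegular (L : PeriodPair) (z : ℂ) : ℂ :=
  ∑' l : L.lattice, if (l : ℂ) = 0 then 0 else (1 / (z - l) + 1 / (l : ℂ) + z / (l : ℂ) ^ 2)

/-- The Weierstrass `ζ`-function of a period lattice, with junk values at the lattice points. -/
def weierstrassZeta (L : PeriodPair) (z : ℂ) : ℂ :=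
  1 / z + weierstrassZetaRegular L z

local notation "ζ[" L "]" => weierstrassZeta L

section Zeta

theorem norm_weierstrassZeta_summand_le {z l : ℂ} (hl : l ≠ 0) (h : 2 * ‖z‖ ≤ ‖l‖) :
    ‖1 / (z - l) + 1 / l + z / l ^ 2‖ ≤ 2 * ‖z‖ ^ 2 * ‖l‖⁻¹ ^ 3 := by
  have hl' : 0 < ‖l‖ := norm_pos_iff.mpr hl
  have hzl : ‖l‖ / 2 ≤ ‖z - l‖ := by
    linarith [norm_sub_norm_le l z, norm_sub_rev l z]
  have hzl' : z - l ≠ 0 := norm_pos_iff.mp (by linarith)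
  calc ‖1 / (z - l) + 1 / l + z / l ^ 2‖ = ‖z‖ ^ 2 / (‖z - l‖ * ‖l‖ ^ 2) := by
        rw [← norm_pow, ← norm_pow, ← norm_mul, ← norm_div]
        congr 1
        field_simp
        ring
    _ ≤ ‖z‖ ^ 2 / (‖l‖ / 2 * ‖l‖ ^ 2) := by gcongr
    _ = 2 * ‖z‖ ^ 2 * ‖l‖⁻¹ ^ 3 := by field_simp

variable (L : PeriodPair)

theorem hasSum_weierstrassZetaRegular (z : ℂ) :
    HasSum (fun l : L.lattice ↦
      if (l : ℂ) = 0 then 0 else (1 / (z - l) + 1 / (l : ℂ) + z / (l : ℂ) ^ 2))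
      (weierstrassZetaRegular L z) := by
  have hmaj : Summable fun l : L.lattice ↦ 2 * ‖z‖ ^ 2 * ‖l‖⁻¹ ^ 3 :=
    (ZLattice.summable_norm_pow_inv L.lattice 3 (by simp)).mul_left _
  refine (hmaj.of_norm_bounded_eventually ?_).hasSum
  rw [← cocompact_eq_cofinite]
  filter_upwards [tendsto_norm_cocompact_atTop.eventually_ge_atTop (2 * ‖z‖)] with l hl
  split_ifs with h0
  · simpa using by positivity
  · exact norm_weierstrassZeta_summand_le h0 hl

theorem hasDerivAt_weierstrassZeta_summand {z l : ℂ} (h : z ≠ l) :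
    HasDerivAt (fun x ↦ 1 / (x - l) + 1 / l + x / l ^ 2) (-(1 / (z - l) ^ 2 - 1 / l ^ 2)) z := by
  have hinv : HasDerivAt (fun x ↦ 1 / (x - l)) (-1 / (z - l) ^ 2) z := by
    simpa only [one_div, id] using! ((hasDerivAt_id z).sub_const l).inv (sub_ne_zero.mpr h)
  exact ((hinv.add_const (1 / l)).add ((hasDerivAt_id z).div_const (l ^ 2))).congr_deriv (by ring)

theorem hasDerivAt_weierstrassZetaRegular {z : ℂ} (hz : z ∈ ((L.lattice : Set ℂ) \ {0})ᶜ) :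
    HasDerivAt (weierstrassZetaRegular L) (-L.weierstrassPExcept 0 z) z := by
  have hderiv := (L.hasSumLocallyUniformly_weierstrassPExcept 0).tendstoLocallyUniformlyOn.neg
    (s := ((L.lattice : Set ℂ) \ {0})ᶜ)
  refine hasDerivAt_of_tendstoLocallyUniformlyOn L.isOpen_compl_lattice_sdiff hderiv
    (.of_forall fun s x hx ↦ ?_) (fun x _ ↦ hasSum_weierstrassZetaRegular L x) hz
  simp only [Pi.neg_apply, ← Finset.sum_neg_distrib]
  refine HasDerivAt.fun_sum fun l _ ↦ ?_
  split_ifs with h0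
  · simpa using! hasDerivAt_const x (0 : ℂ)
  · refine hasDerivAt_weierstrassZeta_summand ?_
    rintro rfl
    exact hx ⟨l.2, h0⟩

theorem weierstrassZetaRegular_neg (z : ℂ) :
    weierstrassZetaRegular L (-z) = -weierstrassZetaRegular L z := by
  unfold weierstrassZetaRegular
  rw [← (Equiv.neg L.lattice).tsum_eq, ← tsum_neg]
  refine tsum_congr fun l ↦ ?_
  simp only [Equiv.neg_apply, NegMemClass.coe_neg, neg_eq_zero]
  split_ifs
  · exact neg_zero.symm
  · rw [show -z - -(l : ℂ) = -(z - l) by ring, one_div_neg_eq_neg_one_div,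
      one_div_neg_eq_neg_one_div]
    ring

theorem weierstrassZetaRegular_zero : weierstrassZetaRegular L 0 = 0 :=
  CharZero.eq_neg_self_iff.mp (by simpa using weierstrassZetaRegular_neg L 0)

theorem weierstrassZeta_neg (z : ℂ) : ζ[L] (-z) = -ζ[L] z := by
  rw [weierstrassZeta, weierstrassZeta, weierstrassZetaRegular_neg, one_div_neg_eq_neg_one_div]
  ring

theorem weierstrassP_eq_inv_sq_add (z : ℂ) : ℘[L] z = 1 / z ^ 2 + L.weierstrassPExcept 0 z := by
  simpa [add_comm] using (L.weierstrassPExcept_add 0 z).symm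

variable {L} in
theorem ne_zero_of_notMem_lattice {z : ℂ} (hz : z ∉ L.lattice) : z ≠ 0 := by
  rintro rfl
  exact hz L.lattice.zero_mem

variable {L} in
theorem hasDerivAt_weierstrassZeta {z : ℂ} (hz : z ∉ L.lattice) :
    HasDerivAt ζ[L] (-℘[L] z) z := by
  have hinv : HasDerivAt (fun x : ℂ ↦ 1 / x) (-(z ^ 2)⁻¹) z := by
    simpa only [one_div] using! hasDerivAt_inv (ne_zero_of_notMem_lattice hz)
  refine (hinv.add (hasDerivAt_weierstrassZetaRegular L (by simp [hz]))).congr_deriv ?_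
  rw [weierstrassP_eq_inv_sq_add]
  ring

variable {L} in
theorem hasDerivAt_weierstrassP {z : ℂ} (hz : z ∉ L.lattice) :
    HasDerivAt ℘[L] (℘'[L] z) z := by
  simpa using (L.analyticOnNhd_weierstrassP z hz).differentiableAt.hasDerivAt

theorem countable_lattice : (L.lattice : Set ℂ).Countable :=
  L.latticeEquivProd.toEquiv.countable_iff.mpr inferInstance

theorem isPreconnected_compl_lattice : IsPreconnected (L.lattice : Set ℂ)ᶜ :=
  ((countable_lattice L).isConnected_compl_of_one_lt_rank
    (by rw [Complex.rank_real_complex]; norm_num)).isPreconnected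

theorem exists_weierstrassZeta_add_coe (l : L.lattice) :
    ∃ η, ∀ z ∉ L.lattice, ζ[L] (z + l) = ζ[L] z + η := by
  have hderiv : ∀ z ∉ L.lattice, HasDerivAt (fun x ↦ ζ[L] (x + l) - ζ[L] x) 0 z := fun z hz ↦ by
    have hzl : z + l ∉ L.lattice := (L.lattice.add_mem_iff_left l.2).not.mpr hz
    refine (((hasDerivAt_weierstrassZeta hzl).comp_add_const z l).sub
      (hasDerivAt_weierstrassZeta hz)).congr_deriv ?_
    rw [L.weierstrassP_add_coe, sub_self]
  obtain ⟨η, hη⟩ := L.isClosed_lattice.isOpen_compl.exists_is_const_of_deriv_eq_zero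
    (isPreconnected_compl_lattice L)
    (fun z hz ↦ (hderiv z hz).differentiableAt.differentiableWithinAt)
    (fun z hz ↦ (hderiv z hz).deriv)
  exact ⟨η, fun z hz ↦ by rw [← hη z hz]; ring⟩

end Zeta

section FrobeniusStickelberger

variable {L : PeriodPair} {u v w z : ℂ}

open Classical in
/-- The difference of the two sides of the Frobenius–Stickelberger relation at `(u, -(u + w), w)`,
as a function of `u`. It is set to `0` at its singularities, which turn out to be removable. -/
def frobeniusStickelbergerDefect (L : PeriodPair) (w u : ℂ) : ℂ :=
  if u ∈ L.lattice ∨ u + w ∈ L.lattice then 0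
  else (ζ[L] u - ζ[L] (u + w) + ζ[L] w) ^ 2 - (℘[L] u + ℘[L] (u + w) + ℘[L] w)

theorem frobeniusStickelbergerDefect_of_notMem (hu : u ∉ L.lattice) (huw : u + w ∉ L.lattice) :
    frobeniusStickelbergerDefect L w u =
      (ζ[L] u - ζ[L] (u + w) + ζ[L] w) ^ 2 - (℘[L] u + ℘[L] (u + w) + ℘[L] w) :=
  if_neg (not_or.mpr ⟨hu, huw⟩)

theorem frobeniusStickelbergerDefect_of_mem (h : u ∈ L.lattice ∨ u + w ∈ L.lattice) :
    frobeniusStickelbergerDefect L w u = 0 :=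
  if_pos h

theorem frobeniusStickelbergerDefect_add_coe (w u : ℂ) (l : L.lattice) :
    frobeniusStickelbergerDefect L w (u + l) = frobeniusStickelbergerDefect L w u := by
  obtain ⟨η, hη⟩ := exists_weierstrassZeta_add_coe L l
  have hadd (z : ℂ) : z + l ∈ L.lattice ↔ z ∈ L.lattice := L.lattice.add_mem_iff_left l.2
  have hshift : u + l + w = u + w + l := by ring
  by_cases h : u ∈ L.lattice ∨ u + w ∈ L.lattice
  · rw [frobeniusStickelbergerDefect_of_mem h, frobeniusStickelbergerDefect_of_mem]
    rwa [hshift, hadd, hadd]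
  · obtain ⟨hu, huw⟩ := not_or.mp h
    rw [frobeniusStickelbergerDefect_of_notMem hu huw, frobeniusStickelbergerDefect_of_notMem
      (by rwa [hadd]) (by rwa [hshift, hadd]), hshift, hη u hu, hη (u + w) huw,
      add_sub_add_right_eq_sub, L.weierstrassP_add_coe, L.weierstrassP_add_coe]

theorem frobeniusStickelbergerDefect_neg_add (w u : ℂ) :
    frobeniusStickelbergerDefect L w (-(u + w)) = frobeniusStickelbergerDefect L w u := by
  have hrefl : -(u + w) + w = -u := by ring
  by_cases h : u ∈ L.lattice ∨ u + w ∈ L.lattice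
  · rw [frobeniusStickelbergerDefect_of_mem h, frobeniusStickelbergerDefect_of_mem]
    rwa [hrefl, neg_mem_iff, neg_mem_iff, or_comm]
  · obtain ⟨hu, huw⟩ := not_or.mp h
    rw [frobeniusStickelbergerDefect_of_notMem hu huw, frobeniusStickelbergerDefect_of_notMem
      (by rwa [neg_mem_iff]) (by rwa [hrefl, neg_mem_iff]), hrefl, weierstrassZeta_neg,
      weierstrassZeta_neg, L.weierstrassP_neg, L.weierstrassP_neg]
    ring

theorem eventually_notMem_lattice (hz : z ∉ L.lattice) : ∀ᶠ x in 𝓝 z, x ∉ L.lattice :=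
  L.isClosed_lattice.isOpen_compl.mem_nhds hz

theorem eventually_add_notMem_lattice (hz : z + w ∉ L.lattice) :
    ∀ᶠ x in 𝓝 z, x + w ∉ L.lattice :=
  (continuous_add_const w).continuousAt.eventually (eventually_notMem_lattice hz)

theorem differentiableAt_frobeniusStickelbergerDefect (hu : u ∉ L.lattice)
    (huw : u + w ∉ L.lattice) : DifferentiableAt ℂ (frobeniusStickelbergerDefect L w) u := by
  have hζu := (hasDerivAt_weierstrassZeta hu).differentiableAt
  have hζuw := ((hasDerivAt_weierstrassZeta huw).comp_add_const u w).differentiableAt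
  have hPu := (hasDerivAt_weierstrassP hu).differentiableAt
  have hPuw := ((hasDerivAt_weierstrassP huw).comp_add_const u w).differentiableAt
  refine DifferentiableAt.congr_of_eventuallyEq (f := fun u ↦
    (ζ[L] u - ζ[L] (u + w) + ζ[L] w) ^ 2 - (℘[L] u + ℘[L] (u + w) + ℘[L] w)) (by fun_prop) ?_
  filter_upwards [eventually_notMem_lattice hu, eventually_add_notMem_lattice huw] with x hx hxw
  exact frobeniusStickelbergerDefect_of_notMem hx hxw

/-- The function `A(u) = ζ(u) - 1 / u - ζ(u + w) + ζ(w)`, the regular part at `u = 0` of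
`ζ(u) + ζ(-(u + w)) + ζ(w)`. -/
def zetaSumRegular (L : PeriodPair) (w u : ℂ) : ℂ :=
  weierstrassZetaRegular L u - ζ[L] (u + w) + ζ[L] w

theorem zetaSumRegular_zero (L : PeriodPair) (w : ℂ) : zetaSumRegular L w 0 = 0 := by
  simp [zetaSumRegular, weierstrassZetaRegular_zero]

theorem hasDerivAt_zetaSumRegular_zero (hw : w ∉ L.lattice) :
    HasDerivAt (zetaSumRegular L w) (℘[L] w) 0 := by
  have hreg := hasDerivAt_weierstrassZetaRegular L (z := 0) (by simp)
  have hw' : 0 + w ∉ L.lattice := by rwa [zero_add]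
  exact ((hreg.sub ((hasDerivAt_weierstrassZeta hw').comp_add_const 0 w)).add_const _).congr_deriv
    (by simp)

theorem frobeniusStickelbergerDefect_eq_slope (hu : u ∉ L.lattice) (huw : u + w ∉ L.lattice) :
    frobeniusStickelbergerDefect L w u =
      2 * slope (zetaSumRegular L w) 0 u + zetaSumRegular L w u ^ 2
        - (L.weierstrassPExcept 0 u + ℘[L] (u + w) + ℘[L] w) := by
  have hu0 : u ≠ 0 := ne_zero_of_notMem_lattice hu
  rw [frobeniusStickelbergerDefect_of_notMem hu huw, slope_def_field, zetaSumRegular_zero,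
    weierstrassP_eq_inv_sq_add, weierstrassZeta, zetaSumRegular]
  field_simp
  ring

theorem continuousAt_frobeniusStickelbergerDefect_zero (hw : w ∉ L.lattice) :
    ContinuousAt (frobeniusStickelbergerDefect L w) 0 := by
  have hw' : 0 + w ∉ L.lattice := by rwa [zero_add]
  have hA := hasDerivAt_zetaSumRegular_zero hw
  have hP : ContinuousAt (fun u ↦ L.weierstrassPExcept 0 u + ℘[L] (u + w) + ℘[L] w) 0 :=
    ((L.analyticAt_weierstrassPExcept 0).continuousAt.add
      ((hasDerivAt_weierstrassP hw').comp_add_const 0 w).continuousAt).add_const _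
  have hlim := ((hasDerivAt_iff_tendsto_slope.mp hA).const_mul 2).add
    ((hA.continuousAt.pow 2).sub hP).continuousWithinAt.tendsto
  rw [continuousAt_iff_punctured_nhds]
  have hval : frobeniusStickelbergerDefect L w 0 = 2 * ℘[L] w + (zetaSumRegular L w 0 ^ 2
      - (L.weierstrassPExcept 0 0 + ℘[L] (0 + w) + ℘[L] w)) := by
    rw [frobeniusStickelbergerDefect_of_mem (.inl L.lattice.zero_mem), zetaSumRegular_zero,
      L.weierstrassPExcept_zero, zero_add w]
    ring
  rw [hval]
  refine hlim.congr' ?_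
  have hlattice : ∀ᶠ u in 𝓝[≠] (0 : ℂ), u ∉ L.lattice := by
    filter_upwards [nhdsWithin_le_nhds (L.compl_lattice_sdiff_singleton_mem_nhds 0),
      self_mem_nhdsWithin] with u hu hu0 hmem
    exact hu ⟨hmem, hu0⟩
  filter_upwards [hlattice, nhdsWithin_le_nhds (eventually_add_notMem_lattice hw')] with u hu huw
  rw [frobeniusStickelbergerDefect_eq_slope hu huw, add_sub_assoc]
  rfl

theorem continuous_frobeniusStickelbergerDefect (hw : w ∉ L.lattice) :
    Continuous (frobeniusStickelbergerDefect L w) := by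
  have hcoe : ∀ l ∈ L.lattice, ContinuousAt (frobeniusStickelbergerDefect L w) l := fun l hl ↦ by
    have hshift : frobeniusStickelbergerDefect L w =
        frobeniusStickelbergerDefect L w ∘ (· - l) := funext fun u ↦ by
      simpa using frobeniusStickelbergerDefect_add_coe w (u - l) ⟨l, hl⟩
    rw [hshift]
    refine ContinuousAt.comp ?_ (by fun_prop)
    simpa using continuousAt_frobeniusStickelbergerDefect_zero hw
  refine continuous_iff_continuousAt.mpr fun u ↦ ?_
  by_cases hu : u ∈ L.lattice
  · exact hcoe u hu
  by_cases huw : u + w ∈ L.lattice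
  · have hrefl : frobeniusStickelbergerDefect L w =
        frobeniusStickelbergerDefect L w ∘ (fun x ↦ -(x + w)) :=
      funext fun x ↦ (frobeniusStickelbergerDefect_neg_add w x).symm
    rw [hrefl]
    exact ContinuousAt.comp (f := fun x ↦ -(x + w)) (hcoe _ (L.lattice.neg_mem huw)) (by fun_prop)
  · exact (differentiableAt_frobeniusStickelbergerDefect hu huw).continuousAt

theorem differentiable_frobeniusStickelbergerDefect (hw : w ∉ L.lattice) :
    Differentiable ℂ (frobeniusStickelbergerDefect L w) := by
  have hcount := (countable_lattice L).union
    ((countable_lattice L).preimage (add_left_injective w))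
  exact differentiable_of_continuous_of_countable hcount
    (continuous_frobeniusStickelbergerDefect hw) fun u hu ↦
      differentiableAt_frobeniusStickelbergerDefect (fun h ↦ hu (.inl h)) (fun h ↦ hu (.inr h))

theorem frobeniusStickelbergerDefect_eq_zero (hw : w ∉ L.lattice) (u : ℂ) :
    frobeniusStickelbergerDefect L w u = 0 := by
  have hd := differentiable_frobeniusStickelbergerDefect hw
  have hbdd := (IsZLattice.isCompact_range_of_periodic L.lattice _ hd.continuous
    fun z l hl ↦ frobeniusStickelbergerDefect_add_coe w z ⟨l, hl⟩).isBounded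
  exact (hd.apply_eq_apply_of_bounded hbdd u 0).trans
    (frobeniusStickelbergerDefect_of_mem (.inl L.lattice.zero_mem))

theorem sq_weierstrassZeta_add_add (hu : u ∉ L.lattice) (hv : v ∉ L.lattice) (hw : w ∉ L.lattice)
    (h : u + v + w = 0) :
    (ζ[L] u + ζ[L] v + ζ[L] w) ^ 2 = ℘[L] u + ℘[L] v + ℘[L] w := by
  obtain rfl : v = -(u + w) := by linear_combination h
  have hdefect := frobeniusStickelbergerDefect_eq_zero hw u
  rw [frobeniusStickelbergerDefect_of_notMem hu (neg_mem_iff.not.mp hv)] at hdefect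
  rw [weierstrassZeta_neg, L.weierstrassP_neg]
  linear_combination hdefect

theorem two_mul_weierstrassZeta_add_add_mul_sub (hu : u ∉ L.lattice) (hv : v ∉ L.lattice)
    (hw : w ∉ L.lattice) (h : u + v + w = 0) :
    2 * (ζ[L] u + ζ[L] v + ζ[L] w) * (℘[L] v - ℘[L] u) = ℘'[L] u - ℘'[L] v := by
  have hut : u + 0 ∉ L.lattice := by rwa [add_zero]
  have hvt : v - 0 ∉ L.lattice := by rwa [sub_zero]
  have hS := (((hasDerivAt_weierstrassZeta hut).comp_const_add u 0).add
    ((hasDerivAt_weierstrassZeta hvt).comp_const_sub v 0)).add_const (ζ[L] w)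
  have hP := (((hasDerivAt_weierstrassP hut).comp_const_add u 0).add
    ((hasDerivAt_weierstrassP hvt).comp_const_sub v 0)).add_const (℘[L] w)
  have hrel : (fun t ↦ (ζ[L] (u + t) + ζ[L] (v - t) + ζ[L] w) ^ 2) =ᶠ[𝓝 0]
      fun t ↦ ℘[L] (u + t) + ℘[L] (v - t) + ℘[L] w := by
    have hcu : ContinuousAt (fun t ↦ u + t) 0 := by fun_prop
    have hcv : ContinuousAt (fun t ↦ v - t) 0 := by fun_prop
    filter_upwards [hcu.eventually (eventually_notMem_lattice hut),
      hcv.eventually (eventually_notMem_lattice hvt)] with t htu htv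
    exact sq_weierstrassZeta_add_add htu htv hw (by linear_combination h)
  have hderiv := (hS.pow 2).unique (hP.congr_of_eventuallyEq hrel)
  simp only [Pi.add_apply, add_zero, sub_zero, Nat.cast_ofNat, Nat.add_one_sub_one, pow_one,
    neg_neg] at hderiv
  linear_combination hderiv

end FrobeniusStickelberger

section Constancy

variable {L : PeriodPair} {a b z : ℂ}

/-- The function `ζ(z) - C z`, which is `ζ₂` for the rectangular lattice and `C = ζ(iδ)/(iδ)`. -/
def correctedZeta (L : PeriodPair) (C z : ℂ) : ℂ := ζ[L] z - C * z

/-- The analogue of `f₂` for the linear correction `C`. -/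
def correctedF (L : PeriodPair) (C z : ℂ) : ℂ := correctedZeta L C z ^ 2 - (℘[L] z + C)

/-- The analogue of `h` for the linear correction `C`. -/
def correctedH (L : PeriodPair) (C z : ℂ) : ℂ :=
  correctedZeta L C z * (correctedF L C z + 3 * C)
    - (2 / 3) * (correctedZeta L C z ^ 3 + 3 * C * correctedZeta L C z + (1 / 2) * ℘'[L] z)

theorem correctedZeta_sub_sub (L : PeriodPair) (C a b z : ℂ) :
    correctedZeta L C (a - z) - correctedZeta L C (b - z) - correctedZeta L C (a - b) =
      ζ[L] (a - z) + ζ[L] (z - b) + ζ[L] (b - a) := by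
  rw [← neg_sub b z, ← neg_sub a b, weierstrassZeta_neg, weierstrassZeta_neg]
  unfold correctedZeta
  ring

theorem G_constant_general (L : PeriodPair) (C : ℂ) (hab : a - b ∉ L.lattice)
    (ha : a - z ∉ L.lattice) (hb : b - z ∉ L.lattice) :
    correctedZeta L C (b - z) * correctedF L C (a - z)
        - correctedZeta L C (a - z) * correctedF L C (b - z)
        + (correctedZeta L C (a - z) - correctedZeta L C (b - z)) * correctedF L C (a - b)
        - correctedH L C (a - z) + correctedH L C (b - z) =
      2 * correctedH L C (a - b) := by
  have hb' : z - b ∉ L.lattice := by rwa [← neg_sub, neg_mem_iff]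
  have hba : b - a ∉ L.lattice := by rwa [← neg_sub, neg_mem_iff]
  have hS := sq_weierstrassZeta_add_add ha hb' hba (by ring)
  have hSb := two_mul_weierstrassZeta_add_add_mul_sub ha hb' hba (by ring)
  have hSa := two_mul_weierstrassZeta_add_add_mul_sub ha hba hb' (by ring)
  rw [add_right_comm] at hSa
  rw [← correctedZeta_sub_sub L C] at hS hSb hSa
  have hPb : ℘[L] (z - b) = ℘[L] (b - z) := by rw [← neg_sub, L.weierstrassP_neg]
  have hPba : ℘[L] (b - a) = ℘[L] (a - b) := by rw [← neg_sub, L.weierstrassP_neg]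
  have hPb' : ℘'[L] (z - b) = -℘'[L] (b - z) := by rw [← neg_sub, L.derivWeierstrassP_neg]
  have hPba' : ℘'[L] (b - a) = -℘'[L] (a - b) := by rw [← neg_sub, L.derivWeierstrassP_neg]
  rw [hPb, hPba] at hS
  rw [hPb, hPb'] at hSb
  rw [hPba, hPba'] at hSa
  unfold correctedH correctedF
  set x := correctedZeta L C (a - z)
  set y := correctedZeta L C (b - z)
  set c := correctedZeta L C (a - b)
  linear_combination (-(c + (x - y - c) / 3)) * hS + (1 / 3) * hSb - (2 / 3) * hSa

end Constancy

section RectangularLattice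

variable {ℓ δ : ℝ}

/-- The period pair `(2ℓ, 2iδ)`, whose lattice is `Lambda ℓ δ`. -/
def rectPeriodPair (hℓ : ℓ ≠ 0) (hδ : δ ≠ 0) : PeriodPair where
  ω₁ := 2 * ℓ
  ω₂ := 2 * (δ * I)
  indep := by
    refine LinearIndependent.pair_iff.mpr fun s t h ↦ ?_
    have hre : s * (2 * ℓ) = 0 := by simpa using congrArg Complex.re h
    have him : t * (2 * δ) = 0 := by simpa using congrArg Complex.im h
    simpa [hℓ, hδ] using And.intro hre him

variable (hℓ : ℓ ≠ 0) (hδ : δ ≠ 0)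

theorem mem_lattice_rectPeriodPair (z : ℂ) :
    z ∈ (rectPeriodPair hℓ hδ).lattice ↔ z ∈ Lambda ℓ δ := by
  rw [PeriodPair.mem_lattice]
  refine exists₂_congr fun n m ↦ ?_
  rw [rectPeriodPair, eq_comm]
  ring_nf

theorem tsum_latticePts (f : ℂ → ℂ) :
    ∑' ω : latticePts ℓ δ, f ω =
      ∑' l : (rectPeriodPair hℓ hδ).lattice, if (l : ℂ) = 0 then 0 else f l := by
  have hcoe : ((rectPeriodPair hℓ hδ).lattice : Set ℂ) = Lambda ℓ δ :=
    Set.ext (mem_lattice_rectPeriodPair hℓ hδ)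
  refine (_root_.tsum_subtype _ f).trans (.trans ?_ (_root_.tsum_subtype
    ((rectPeriodPair hℓ hδ).lattice : Set ℂ) fun z ↦ if z = 0 then 0 else f z).symm)
  rw [hcoe]
  refine tsum_congr fun z ↦ ?_
  by_cases hz : z ∈ Lambda ℓ δ <;> by_cases h0 : z = 0 <;>
    simp [latticePts, Set.indicator, hz, h0]

theorem wZeta_eq_weierstrassZeta (z : ℂ) :
    wZeta ℓ δ z = ζ[rectPeriodPair hℓ hδ] z :=
  congrArg (1 / z + ·)
    (tsum_latticePts hℓ hδ fun ω ↦ 1 / (z - ω) + 1 / ω + z / ω ^ 2)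

theorem wP_eq_weierstrassP (z : ℂ) : wP ℓ δ z = ℘[rectPeriodPair hℓ hδ] z := by
  rw [weierstrassP_eq_inv_sq_add, wP, tsum_latticePts hℓ hδ fun ω ↦ 1 / (z - ω) ^ 2 - 1 / ω ^ 2]
  rfl

theorem zeta2_eq_correctedZeta (z : ℂ) :
    zeta2 ℓ δ z =
      correctedZeta (rectPeriodPair hℓ hδ) (wZeta ℓ δ (δ * I) / (δ * I)) z := by
  rw [zeta2, correctedZeta, ← wZeta_eq_weierstrassZeta]

theorem f2_eq_correctedF (z : ℂ) :
    f2 ℓ δ z = correctedF (rectPeriodPair hℓ hδ) (wZeta ℓ δ (δ * I) / (δ * I)) z := by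
  rw [f2, wp2, correctedF, zeta2_eq_correctedZeta hℓ hδ, wP_eq_weierstrassP hℓ hδ]

theorem deriv_wp2_eq_derivWeierstrassP : deriv (wp2 ℓ δ) = ℘'[rectPeriodPair hℓ hδ] := by
  rw [← PeriodPair.deriv_weierstrassP, ← funext (wP_eq_weierstrassP hℓ hδ)]
  exact funext fun z ↦ deriv_add_const _

end RectangularLattice

/-- The function `G` built from `ζ₂`, `f₂` and `h` is constant in its third argument. -/
theorem G_constant
    (ℓ δ : ℝ) (hℓ : 0 < ℓ) (hδ : 0 < δ)
    (a b : ℂ) (hab : a - b ∉ Lambda ℓ δ) :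
    ∀ z₁ ∈ {z : ℂ | a - z ∉ Lambda ℓ δ ∧ b - z ∉ Lambda ℓ δ},
    ∀ z₂ ∈ {z : ℂ | a - z ∉ Lambda ℓ δ ∧ b - z ∉ Lambda ℓ δ},
      (fun z : ℂ =>
        zeta2 ℓ δ (b - z) * f2 ℓ δ (a - z) - zeta2 ℓ δ (a - z) * f2 ℓ δ (b - z)
          + (zeta2 ℓ δ (a - z) - zeta2 ℓ δ (b - z)) * f2 ℓ δ (a - b)
          - (fun w : ℂ =>
              zeta2 ℓ δ w * (f2 ℓ δ w + 3 * wZeta ℓ δ ((δ : ℂ) * Complex.I) / ((δ : ℂ) * Complex.I))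
                - (2/3 : ℂ) * ((zeta2 ℓ δ w) ^ 3
                  + 3 * (wZeta ℓ δ ((δ : ℂ) * Complex.I) / ((δ : ℂ) * Complex.I)) * zeta2 ℓ δ w
                  + (1/2 : ℂ) * deriv (wp2 ℓ δ) w)) (a - z)
          + (fun w : ℂ =>
              zeta2 ℓ δ w * (f2 ℓ δ w + 3 * wZeta ℓ δ ((δ : ℂ) * Complex.I) / ((δ : ℂ) * Complex.I))
                - (2/3 : ℂ) * ((zeta2 ℓ δ w) ^ 3
                  + 3 * (wZeta ℓ δ ((δ : ℂ) * Complex.I) / ((δ : ℂ) * Complex.I)) * zeta2 ℓ δ w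
                  + (1/2 : ℂ) * deriv (wp2 ℓ δ) w)) (b - z)) z₁
      = (fun z : ℂ =>
        zeta2 ℓ δ (b - z) * f2 ℓ δ (a - z) - zeta2 ℓ δ (a - z) * f2 ℓ δ (b - z)
          + (zeta2 ℓ δ (a - z) - zeta2 ℓ δ (b - z)) * f2 ℓ δ (a - b)
          - (fun w : ℂ =>
              zeta2 ℓ δ w * (f2 ℓ δ w + 3 * wZeta ℓ δ ((δ : ℂ) * Complex.I) / ((δ : ℂ) * Complex.I))
                - (2/3 : ℂ) * ((zeta2 ℓ δ w) ^ 3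
                  + 3 * (wZeta ℓ δ ((δ : ℂ) * Complex.I) / ((δ : ℂ) * Complex.I)) * zeta2 ℓ δ w
                  + (1/2 : ℂ) * deriv (wp2 ℓ δ) w)) (a - z)
          + (fun w : ℂ =>
              zeta2 ℓ δ w * (f2 ℓ δ w + 3 * wZeta ℓ δ ((δ : ℂ) * Complex.I) / ((δ : ℂ) * Complex.I))
                - (2/3 : ℂ) * ((zeta2 ℓ δ w) ^ 3
                  + 3 * (wZeta ℓ δ ((δ : ℂ) * Complex.I) / ((δ : ℂ) * Complex.I)) * zeta2 ℓ δ w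
                  + (1/2 : ℂ) * deriv (wp2 ℓ δ) w)) (b - z)) z₂ := by
  rintro z₁ ⟨ha₁, hb₁⟩ z₂ ⟨ha₂, hb₂⟩
  rw [← mem_lattice_rectPeriodPair hℓ.ne' hδ.ne'] at hab ha₁ hb₁ ha₂ hb₂
  simp only [zeta2_eq_correctedZeta hℓ.ne' hδ.ne', f2_eq_correctedF hℓ.ne' hδ.ne',
    deriv_wp2_eq_derivWeierstrassP hℓ.ne' hδ.ne', mul_div_assoc]
  exact (G_constant_general _ _ hab ha₁ hb₁).trans (G_constant_general _ _ hab ha₂ hb₂).symm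

end
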